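/- Let f : S → ℂ be a non-zero solution of the integral Van Vleck equation. Then there exists a multiplicative function χ : S → ℂ (i.e. χ(xy) = χ(x)χ(y) for all x, y ∈ S) with Σ_{i∈I} c_i χ(z_i) ≠ 0 and Σ_{i∈I} c_i χ(τ(z_i)) = −Σ_{i∈I} c_i χ(z_i), such that f(x) = ((χ(x) − χ(τ(x)))/2) · Σ_{i∈I} c_i χ(τ(z_i)) for all x ∈ S. -/

import Mathlib

/-!
Write `μ = ∑ cᵢ δ_{zᵢ}`, `g x = ∫ f (x t) dμ(t)` and `m = ∫ f dμ`. The equation forces `f ∘ τ = -f`,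
and comparing it at `(x, τ w)` and `(τ w, x)` gives `g (τ (x w)) = g (x w)` for every central `w`.
Hence `∫ g (x τ(t)) dμ(t) = -∫ g (x t) dμ(t)`. Integrating the equation over `y` against `μ` shows
that these two integrals differ by `2 m f x`, so they are `m f x` and `-m f x`. The translates
of the equation in `x` and in `y`, integrated against `μ`, now add up to the sine addition law
`m f (x y) = g x f y + f x g y`, and integrating that law gives the cosine addition law
`m g (x y) = g x g y - m f x f y`. So `g / m + β f` is multiplicative as soon as `β² = -1 / m`,
just as `exp (i x) = cos x + i sin x` is.
-/

/-- The multiplicative function `h + β f` (an abstract `cos + i sin`) attached to a pair `f`, `h`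
obeying the sine and cosine addition laws. -/
def mulHomOfAdditionLaws {S R : Type*} [Mul S] [CommSemiring R] (f h : S → R) (β : R)
    (hf : ∀ x y, f (x * y) = h x * f y + f x * h y)
    (hh : ∀ x y, h (x * y) = h x * h y + β * β * (f x * f y)) : S →ₙ* R where
  toFun x := h x + β * f x
  map_mul' x y := by rw [hf, hh]; ring

/-- The function `x ↦ ∫ f (x t) dμ(t)` for the discrete measure `μ = ∑ i ∈ I, c i • δ_{z i}`. -/
def translateSum {S ι R : Type*} [Mul S] [Semiring R] (I : Finset ι) (c : ι → R) (z : ι → S)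
    (f : S → R) (x : S) : R :=
  ∑ i ∈ I, c i * f (x * z i)

/-- The integral Van Vleck equation for the discrete measure `μ = ∑ i ∈ I, c i • δ_{z i}`. -/
def VanVleckEquation {S ι R : Type*} [Mul S] [Ring R] (τ : S → S) (I : Finset ι) (c : ι → R)
    (z : ι → S) (f : S → R) : Prop :=
  ∀ x y, translateSum I c z f (x * τ y) - translateSum I c z f (x * y) = 2 * f x * f y

theorem commute_involution {S : Type*} [Mul S] {τ : S → S} (hτmul : ∀ x y, τ (x * y) = τ y * τ x)
    (hτinv : τ.Involutive) {w : S} (hw : ∀ s, Commute w s) (s : S) : Commute (τ w) s := by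
  have h := congrArg τ (hw (τ s)).eq
  rw [hτmul, hτmul, hτinv] at h
  exact h.symm

section TranslateSum

variable {S ι R : Type*} [Semigroup S] {I : Finset ι} {z : ι → S}
  (hz : ∀ i ∈ I, ∀ s, Commute (z i) s)

include hz

theorem translateSum_comm [CommSemiring R] (c : ι → R) (w : ι → S) (f : S → R) (x : S) :
    translateSum I c z (translateSum I c w f) x = translateSum I c w (translateSum I c z f) x := by
  simp only [translateSum, Finset.mul_sum]
  rw [Finset.sum_comm]
  refine Finset.sum_congr rfl fun j _ ↦ Finset.sum_congr rfl fun i hi ↦ ?_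
  rw [(hz i hi (w j)).right_comm, mul_left_comm]

theorem translateSum_apply_involution_of_odd [CommRing R] {τ : S → S}
    (hτmul : ∀ x y, τ (x * y) = τ y * τ x) (hτinv : τ.Involutive) (c : ι → R) {f : S → R}
    (hodd : ∀ x, f (τ x) = -f x) (x : S) :
    translateSum I c z f (τ x) = -translateSum I c (τ ∘ z) f x := by
  simp only [translateSum, ← Finset.sum_neg_distrib]
  refine Finset.sum_congr rfl fun i hi ↦ ?_
  have hx : τ x * z i = τ (x * τ (z i)) := by rw [hτmul, hτinv, (hz i hi _).eq]
  rw [hx, hodd, mul_neg, Function.comp_apply]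

end TranslateSum

namespace VanVleckEquation

variable {S ι R : Type*} [Semigroup S] [CommRing R] {τ : S → S} {I : Finset ι} {c : ι → R}
  {z : ι → S} {f : S → R}

theorem integrate_left (h : VanVleckEquation τ I c z f) (hz : ∀ i ∈ I, ∀ s, Commute (z i) s)
    (x y : S) :
    translateSum I c z (translateSum I c z f) (x * τ y) -
      translateSum I c z (translateSum I c z f) (x * y) = 2 * translateSum I c z f x * f y := by
  rw [translateSum, translateSum, translateSum, ← Finset.sum_sub_distrib, Finset.mul_sum,
    Finset.sum_mul]
  refine Finset.sum_congr rfl fun i hi ↦ ?_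
  rw [← (hz i hi (τ y)).right_comm, ← (hz i hi y).right_comm]
  linear_combination c i * h (x * z i) y

theorem integrate_right (h : VanVleckEquation τ I c z f)
    (hτmul : ∀ x y, τ (x * y) = τ y * τ x) (hτinv : τ.Involutive)
    (hz : ∀ i ∈ I, ∀ s, Commute (z i) s) (x y : S) :
    translateSum I c (τ ∘ z) (translateSum I c z f) (x * τ y) -
      translateSum I c z (translateSum I c z f) (x * y) = 2 * f x * translateSum I c z f y := by
  rw [translateSum, translateSum, translateSum.eq_def I c z f y, ← Finset.sum_sub_distrib,
    Finset.mul_sum]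
  refine Finset.sum_congr rfl fun i hi ↦ ?_
  have hi' := h x (y * z i)
  rw [hτmul, (commute_involution hτmul hτinv (hz i hi) _).eq, ← mul_assoc, ← mul_assoc] at hi'
  rw [Function.comp_apply]
  linear_combination c i * hi'

theorem integrate_support (h : VanVleckEquation τ I c z f) (x : S) :
    translateSum I c (τ ∘ z) (translateSum I c z f) x -
      translateSum I c z (translateSum I c z f) x = 2 * f x * ∑ i ∈ I, c i * f (z i) := by
  rw [translateSum, translateSum, ← Finset.sum_sub_distrib, Finset.mul_sum]
  refine Finset.sum_congr rfl fun i _ ↦ ?_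
  rw [Function.comp_apply]
  linear_combination c i * h x (z i)

theorem translateSum_apply_involution_mul (h : VanVleckEquation τ I c z f)
    (hτmul : ∀ x y, τ (x * y) = τ y * τ x) (hτinv : τ.Involutive) {w : S}
    (hw : ∀ s, Commute w s) (x : S) :
    translateSum I c z f (τ (x * w)) = translateSum I c z f (x * w) := by
  have hxw := h x (τ w)
  have hwx := h (τ w) x
  rw [hτinv] at hxw
  rw [(commute_involution hτmul hτinv hw x).eq, ← hτmul] at hwx
  linear_combination hwx - hxw

variable [NoZeroDivisors R] [NeZero (2 : R)]

theorem apply_involution (h : VanVleckEquation τ I c z f) (hτinv : τ.Involutive) (hf : f ≠ 0)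
    (x : S) : f (τ x) = -f x := by
  obtain ⟨a, ha⟩ := Function.ne_iff.1 hf
  have hxτ := h a (τ x)
  rw [hτinv] at hxτ
  refine mul_left_cancel₀ (mul_ne_zero two_ne_zero ha) ?_
  linear_combination -h a x - hxτ

theorem translateSum_ne_zero (h : VanVleckEquation τ I c z f) (hf : f ≠ 0) :
    translateSum I c z f ≠ 0 := by
  obtain ⟨a, ha⟩ := Function.ne_iff.1 hf
  intro hg
  have haa := h a a
  simp only [hg, Pi.zero_apply, sub_self] at haa
  exact mul_ne_zero (mul_ne_zero two_ne_zero ha) ha haa.symm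

section Nonzero

variable (h : VanVleckEquation τ I c z f) (hτmul : ∀ x y, τ (x * y) = τ y * τ x)
  (hτinv : τ.Involutive) (hz : ∀ i ∈ I, ∀ s, Commute (z i) s) (hf : f ≠ 0)

include h hτmul hτinv hz hf

theorem translateSum_comp_translateSum (x : S) :
    translateSum I c (τ ∘ z) (translateSum I c z f) x =
      -translateSum I c z (translateSum I c z f) x := by
  have hodd := h.apply_involution hτinv hf
  rw [← translateSum_comm hz, translateSum, translateSum, ← Finset.sum_neg_distrib]
  refine Finset.sum_congr rfl fun i hi ↦ ?_
  rw [← h.translateSum_apply_involution_mul hτmul hτinv (hz i hi),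
    translateSum_apply_involution_of_odd hz hτmul hτinv c hodd, mul_neg, neg_neg]

theorem translateSum_translateSum (x : S) :
    translateSum I c z (translateSum I c z f) x = -((∑ i ∈ I, c i * f (z i)) * f x) := by
  refine mul_left_cancel₀ (two_ne_zero (α := R)) ?_
  linear_combination h.translateSum_comp_translateSum hτmul hτinv hz hf x -
    h.integrate_support x

theorem sum_mul_sub_apply_involution (x y : S) :
    (∑ i ∈ I, c i * f (z i)) * (f (x * y) - f (x * τ y)) = 2 * translateSum I c z f x * f y := by
  rw [← h.integrate_left hz, h.translateSum_translateSum hτmul hτinv hz hf,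
    h.translateSum_translateSum hτmul hτinv hz hf]
  ring

theorem sum_mul_add_apply_involution (x y : S) :
    (∑ i ∈ I, c i * f (z i)) * (f (x * y) + f (x * τ y)) = 2 * f x * translateSum I c z f y := by
  rw [← h.integrate_right hτmul hτinv hz,
    h.translateSum_comp_translateSum hτmul hτinv hz hf,
    h.translateSum_translateSum hτmul hτinv hz hf, h.translateSum_translateSum hτmul hτinv hz hf]
  ring

theorem sum_ne_zero : ∑ i ∈ I, c i * f (z i) ≠ 0 := by
  intro hm
  obtain ⟨a, ha⟩ := Function.ne_iff.1 hf
  refine h.translateSum_ne_zero hf (funext fun x ↦ ?_)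
  have hxa := h.sum_mul_sub_apply_involution hτmul hτinv hz hf x a
  rw [hm, zero_mul] at hxa
  exact (mul_eq_zero.1 ((mul_eq_zero.1 hxa.symm).resolve_right ha)).resolve_left two_ne_zero

theorem sine_addition_law (x y : S) :
    (∑ i ∈ I, c i * f (z i)) * f (x * y) =
      translateSum I c z f x * f y + f x * translateSum I c z f y := by
  refine mul_left_cancel₀ (two_ne_zero (α := R)) ?_
  linear_combination h.sum_mul_sub_apply_involution hτmul hτinv hz hf x y +
    h.sum_mul_add_apply_involution hτmul hτinv hz hf x y

theorem cosine_addition_law (x y : S) :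
    (∑ i ∈ I, c i * f (z i)) * translateSum I c z f (x * y) =
      translateSum I c z f x * translateSum I c z f y -
        (∑ i ∈ I, c i * f (z i)) * (f x * f y) := by
  have hintegrate : (∑ i ∈ I, c i * f (z i)) * translateSum I c z f (x * y) =
      translateSum I c z f x * translateSum I c z f y +
        f x * translateSum I c z (translateSum I c z f) y := by
    rw [translateSum.eq_def I c z f (x * y), translateSum.eq_def I c z f y,
      translateSum.eq_def I c z _ y, Finset.mul_sum, Finset.mul_sum, Finset.mul_sum,
      ← Finset.sum_add_distrib]
    refine Finset.sum_congr rfl fun i _ ↦ ?_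
    rw [mul_assoc x]
    linear_combination c i * h.sine_addition_law hτmul hτinv hz hf x (y * z i)
  rw [hintegrate, h.translateSum_translateSum hτmul hτinv hz hf]
  ring

theorem translateSum_apply_involution (x : S) :
    translateSum I c z f (τ x) = translateSum I c z f x := by
  obtain ⟨a, ha⟩ := Function.ne_iff.1 hf
  have hτx := h.sum_mul_add_apply_involution hτmul hτinv hz hf a (τ x)
  rw [hτinv] at hτx
  refine mul_left_cancel₀ (mul_ne_zero two_ne_zero ha) ?_
  linear_combination h.sum_mul_add_apply_involution hτmul hτinv hz hf a x - hτx

theorem sum_translateSum_eq_zero : ∑ i ∈ I, c i * translateSum I c z f (z i) = 0 := by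
  obtain ⟨a, ha⟩ := Function.ne_iff.1 hf
  have hintegrate : (∑ i ∈ I, c i * f (z i)) * translateSum I c z f a =
      (∑ i ∈ I, c i * translateSum I c z f (z i)) * f a +
        (∑ i ∈ I, c i * f (z i)) * translateSum I c z f a := by
    conv_lhs => rw [translateSum, Finset.mul_sum]
    rw [Finset.sum_mul, Finset.sum_mul, ← Finset.sum_add_distrib]
    refine Finset.sum_congr rfl fun i hi ↦ ?_
    rw [← (hz i hi a).eq]
    linear_combination c i * h.sine_addition_law hτmul hτinv hz hf (z i) a
  exact (mul_eq_zero.1 (right_eq_add.1 hintegrate)).resolve_right ha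

end Nonzero

section Field

variable {K : Type*} [Field K] [NeZero (2 : K)] {c : ι → K} {f : S → K}
  (h : VanVleckEquation τ I c z f) (hτmul : ∀ x y, τ (x * y) = τ y * τ x)
  (hτinv : τ.Involutive) (hz : ∀ i ∈ I, ∀ s, Commute (z i) s) (hf : f ≠ 0)

include h hτmul hτinv hz hf

theorem exists_mulHom_eq_add {β : K} (hβ : β * β * ∑ i ∈ I, c i * f (z i) = -1) :
    ∃ χ : S →ₙ* K,
      (∀ x, χ x = translateSum I c z f x / (∑ i ∈ I, c i * f (z i)) + β * f x) ∧
      ∀ x, χ (τ x) = translateSum I c z f x / (∑ i ∈ I, c i * f (z i)) + -β * f x := by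
  have hm := h.sum_ne_zero hτmul hτinv hz hf
  refine ⟨mulHomOfAdditionLaws f (fun x ↦ translateSum I c z f x / ∑ i ∈ I, c i * f (z i)) β
    (fun x y ↦ ?_) (fun x y ↦ ?_), fun _ ↦ rfl, fun x ↦ ?_⟩
  · field_simp
    linear_combination h.sine_addition_law hτmul hτinv hz hf x y
  · rw [eq_div_of_mul_eq hm hβ]
    field_simp
    linear_combination h.cosine_addition_law hτmul hτinv hz hf x y
  · change translateSum I c z f (τ x) / _ + β * f (τ x) = _
    rw [h.translateSum_apply_involution hτmul hτinv hz hf, h.apply_involution hτinv hf,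
      neg_mul_comm]

theorem sum_translateSum_div_add (s : K) :
    ∑ i ∈ I, c i * (translateSum I c z f (z i) / (∑ j ∈ I, c j * f (z j)) + s * f (z i)) =
      s * ∑ i ∈ I, c i * f (z i) := by
  simp only [mul_add, Finset.sum_add_distrib, mul_div_assoc', mul_left_comm _ s, ← Finset.sum_div,
    ← Finset.mul_sum, h.sum_translateSum_eq_zero hτmul hτinv hz hf, zero_div, zero_add]

end Field

end VanVleckEquation

theorem stmt_9_general {S ι K : Type*} [Semigroup S] [Field K] [NeZero (2 : K)]
    (hK : ∀ a : K, IsSquare a) {τ : S → S} (hτmul : ∀ x y, τ (x * y) = τ y * τ x)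
    (hτinv : τ.Involutive) {I : Finset ι} {c : ι → K} {z : ι → S}
    (hz : ∀ i ∈ I, ∀ s, Commute (z i) s) {f : S → K} (hf : f ≠ 0)
    (h : VanVleckEquation τ I c z f) :
    ∃ χ : S →ₙ* K, (∑ i ∈ I, c i * χ (z i)) ≠ 0 ∧
      (∑ i ∈ I, c i * χ (τ (z i))) = -(∑ i ∈ I, c i * χ (z i)) ∧
      ∀ x, f x = ((χ x - χ (τ x)) / 2) * ∑ i ∈ I, c i * χ (τ (z i)) := by
  have hm := h.sum_ne_zero hτmul hτinv hz hf
  obtain ⟨β, hβ⟩ := hK (-1 / ∑ i ∈ I, c i * f (z i))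
  have hβm : β * β * ∑ i ∈ I, c i * f (z i) = -1 := by rw [← hβ, div_mul_cancel₀ _ hm]
  have hβ0 : β ≠ 0 := by
    rintro rfl
    simp at hβm
  obtain ⟨χ, hχ, hχτ⟩ := h.exists_mulHom_eq_add hτmul hτinv hz hf hβm
  have hsum : ∑ i ∈ I, c i * χ (z i) = β * ∑ i ∈ I, c i * f (z i) := by
    simp only [hχ, h.sum_translateSum_div_add hτmul hτinv hz hf]
  have hsumτ : ∑ i ∈ I, c i * χ (τ (z i)) = -β * ∑ i ∈ I, c i * f (z i) := by
    simp only [hχτ, h.sum_translateSum_div_add hτmul hτinv hz hf]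
  have hdiff (x : S) : (χ x - χ (τ x)) / 2 = β * f x := by
    rw [hχ, hχτ, div_eq_iff two_ne_zero]
    ring
  refine ⟨χ, hsum ▸ mul_ne_zero hβ0 hm, by rw [hsum, hsumτ, neg_mul], fun x ↦ ?_⟩
  rw [hdiff, hsumτ]
  linear_combination f x * hβm

theorem stmt_9 {S ι : Type*} [Semigroup S] (τ : S → S)
    (hτmul : ∀ x y : S, τ (x * y) = τ y * τ x)
    (hτinv : ∀ x : S, τ (τ x) = x)
    (I : Finset ι) (c : ι → ℂ) (z : ι → S)
    (hz : ∀ i ∈ I, ∀ s : S, z i * s = s * z i)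
    (f : S → ℂ) (hf : f ≠ 0)
(hVV : ∀ x y : S,
      (∑ i ∈ I, c i * f (x * τ y * z i)) - (∑ i ∈ I, c i * f (x * y * z i))
        = 2 * f x * f y) :
    ∃ χ : S → ℂ, (∀ x y : S, χ (x * y) = χ x * χ y) ∧
      (∑ i ∈ I, c i * χ (z i)) ≠ 0 ∧
      (∑ i ∈ I, c i * χ (τ (z i))) = -(∑ i ∈ I, c i * χ (z i)) ∧
      ∀ x : S, f x = ((χ x - χ (τ x)) / 2) * ∑ i ∈ I, c i * χ (τ (z i)) := by
  obtain ⟨χ, hχ⟩ := stmt_9_general Complex.isSquare hτmul hτinv hz hf hVV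
  exact ⟨χ, map_mul χ, hχ⟩
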